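/- arXiv:1005.0724 — 2 statements merged into one kernel-verified Lean document; each statement's English description precedes it below -/
import Mathlib

section
/- Let m >= 1 and n > m be integers. Let mu, mu' : Q_p^* -> C^* be group homomorphisms such that mu is trivial on 1 + p^{n-m} Z_p, mu' is trivial on 1 + p^m Z_p, and neither mu nor mu' is unramified; set alpha = mu(p)^{-1} * sqrt(p). Let v : G -> C be a function such that: (i) v(b*g) = mu(a) * mu'(d) * |a/d|^{1/2} * v(g) for every b = [[a,b0],[0,d]] in B and g in G; (ii) v(g*k) = mu(d) * mu'(d) * v(g) for every g in G and every k in I_n whose (2,2) entry is d; (iii) v(k) = 0 for every k in K not lying in I_m \ I_{m+1}; (iv) v([[1,0],[p^m,1]]) = 1. Then for every integer r >= 0 and every k in K: v(k*gamma^r) = alpha^r * mu(p^{m+r} * det(k) / c) * mu'(d) if k = [[*,*],[c,d]] lies in I_{m+r} \ I_{m+r+1}, and v(k*gamma^r) = 0 otherwise. -/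
open Matrix

noncomputable section

variable (p : ℕ) [Fact p.Prime]

/-- The underlying matrix of an element of `GL₂(ℚ_p)`. -/
def mat (g : GL (Fin 2) ℚ_[p]) : Matrix (Fin 2) (Fin 2) ℚ_[p] := g

/-- Membership in `K = GL₂(ℤ_p)`: all entries are `p`-adic integers and the
determinant is a unit of `ℤ_p`. -/
def inK (g : GL (Fin 2) ℚ_[p]) : Prop :=
  (∀ i j, ‖mat p g i j‖ ≤ 1) ∧ ‖(mat p g).det‖ = 1

/-- Membership in the Iwahori subgroup `I_n` of `K`: for `n = 0`, `I_0 = K`;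
for `n ≥ 1`, the diagonal entries are units of `ℤ_p` and the lower left entry
lies in `p^n ℤ_p`. -/
def inI (n : ℕ) (g : GL (Fin 2) ℚ_[p]) : Prop :=
  inK p g ∧ (n = 0 ∨
    (‖mat p g 0 0‖ = 1 ∧ ‖mat p g 1 1‖ = 1 ∧ ‖mat p g 1 0‖ ≤ (p : ℝ) ^ (-(n : ℤ))))

/-- `p` as a unit of `ℚ_p`. -/
def pu : ℚ_[p]ˣ :=
  Units.mk0 (p : ℚ_[p]) (by exact_mod_cast (Fact.out : p.Prime).ne_zero)

/-- The element `γ = diag(p⁻¹, 1)` of `GL₂(ℚ_p)`. -/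
def gamma : GL (Fin 2) ℚ_[p] :=
  Matrix.GeneralLinearGroup.mkOfDetNeZero !![(p : ℚ_[p])⁻¹, 0; 0, 1] (by
    have hp : (p : ℚ_[p]) ≠ 0 := by exact_mod_cast (Fact.out : p.Prime).ne_zero
    simp [Matrix.det_fin_two_of, hp])

/-- A character of `ℚ_p^×` is unramified if it is trivial on `ℤ_p^×`. -/
def Unramified (μ : ℚ_[p]ˣ →* ℂˣ) : Prop :=
  ∀ u : ℚ_[p]ˣ, ‖(u : ℚ_[p])‖ = 1 → μ u = 1

/-- A character of `ℚ_p^×` is trivial on `1 + p^j ℤ_p`. -/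
def TrivialOnOnePlusP (j : ℕ) (μ : ℚ_[p]ˣ →* ℂˣ) : Prop :=
  ∀ u : ℚ_[p]ˣ, ‖(u : ℚ_[p]) - 1‖ ≤ (p : ℝ) ^ (-(j : ℤ)) → μ u = 1

/-- The element `[[1,0],[p^m,1]]` of `GL₂(ℚ_p)`. -/
def lowerPm (m : ℕ) : GL (Fin 2) ℚ_[p] :=
  Matrix.GeneralLinearGroup.mkOfDetNeZero !![(1 : ℚ_[p]), 0; (p : ℚ_[p]) ^ m, 1] (by
    simp [Matrix.det_fin_two_of])

abbrev mk4 (a b c d : ℚ_[p]) (h : a * d - b * c ≠ 0) : GL (Fin 2) ℚ_[p] :=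
  Matrix.GeneralLinearGroup.mkOfDetNeZero !![a, b; c, d] (by
    simpa [Matrix.det_fin_two_of] using h)

lemma mat_mk4 (a b c d : ℚ_[p]) (h : a * d - b * c ≠ 0) :
    mat p (mk4 p a b c d h) = !![a, b; c, d] := rfl

lemma mat_mul4 (g h : GL (Fin 2) ℚ_[p]) : mat p (g * h) = mat p g * mat p h := rfl

lemma mat_inj4 {g h : GL (Fin 2) ℚ_[p]} (e : mat p g = mat p h) : g = h := Units.ext e

lemma mat_eta4 (g : GL (Fin 2) ℚ_[p]) :
    mat p g = !![mat p g 0 0, mat p g 0 1; mat p g 1 0, mat p g 1 1] :=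
  Matrix.eta_fin_two _

lemma pne4 : (p : ℚ_[p]) ≠ 0 := by exact_mod_cast (Fact.out : p.Prime).ne_zero

lemma mat_gamma_pow4 (r : ℕ) : mat p (gamma p ^ r) = !![((p : ℚ_[p]) ^ r)⁻¹, 0; 0, 1] := by
  induction r with
  | zero => simp [mat, Matrix.one_fin_two]
  | succ r ih =>
    rw [pow_succ, mat_mul4, ih]
    have : mat p (gamma p) = !![(p : ℚ_[p])⁻¹, 0; 0, 1] := rfl
    rw [this]
    simp [pow_succ, mul_comm]

lemma mat_lower4 (m : ℕ) : mat p (lowerPm p m) = !![1, 0; (p : ℚ_[p]) ^ m, 1] := rfl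

lemma norm_eq4 (x : ℚ_[p]) (m : ℕ) (h1 : ‖x‖ ≤ (p : ℝ) ^ (-(m : ℤ)))
    (h2 : ¬ ‖x‖ ≤ (p : ℝ) ^ (-((m + 1 : ℕ) : ℤ))) : ‖x‖ = (p : ℝ) ^ (-(m : ℤ)) := by
  apply le_antisymm h1
  by_contra hlt
  apply h2
  rw [Padic.norm_le_pow_iff_norm_lt_pow_add_one]
  push_cast
  ring_nf at hlt ⊢
  exact lt_of_not_ge hlt

lemma inI_iff4 {n : ℕ} (hn : 1 ≤ n) (g : GL (Fin 2) ℚ_[p]) (hg : inK p g) :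
    inI p n g ↔ (‖mat p g 0 0‖ = 1 ∧ ‖mat p g 1 1‖ = 1 ∧
      ‖mat p g 1 0‖ ≤ (p : ℝ) ^ (-(n : ℤ))) := by
  have : n ≠ 0 := by omega
  simp [inI, hg, this]

lemma base4 (m n : ℕ) (hm : 1 ≤ m)
    (μ μ' : ℚ_[p]ˣ →* ℂˣ)
    (v : GL (Fin 2) ℚ_[p] → ℂ)
    (hvB : ∀ (b g : GL (Fin 2) ℚ_[p]) (a d : ℚ_[p]ˣ),
      mat p b 1 0 = 0 → mat p b 0 0 = a → mat p b 1 1 = d →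
      v (b * g) = (μ a : ℂ) * (μ' d : ℂ) *
        (Real.sqrt ‖(a : ℚ_[p]) / (d : ℚ_[p])‖ : ℂ) * v g)
    (hvI : ∀ (g k : GL (Fin 2) ℚ_[p]) (d : ℚ_[p]ˣ),
      inI p n k → mat p k 1 1 = d →
      v (g * k) = (μ d : ℂ) * (μ' d : ℂ) * v g)
    (hv1 : v (lowerPm p m) = 1) (k : GL (Fin 2) ℚ_[p]) (u d : ℚ_[p]ˣ)
    (h1 : inI p m k) (h2 : ¬ inI p (m + 1) k)
    (hu : (u : ℚ_[p]) = (p : ℚ_[p]) ^ m * (mat p k).det / mat p k 1 0)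
    (hd : mat p k 1 1 = d) : v k = (μ u : ℂ) * (μ' d : ℂ) := by
  have hK := h1.1
  have hp := pne4 p
  rw [inI_iff4 p hm k hK] at h1
  rw [inI_iff4 p (by omega) k hK] at h2
  obtain ⟨ha1, hd1, hc1⟩ := h1
  have hc := norm_eq4 p _ m hc1 (fun h => h2 ⟨ha1, hd1, h⟩)
  have hpm : ‖(p : ℚ_[p]) ^ m‖ = (p : ℝ) ^ (-(m : ℤ)) := by
    rw [← zpow_natCast, Padic.norm_p_zpow]
  have hpm0 : (p : ℚ_[p]) ^ m ≠ 0 := pow_ne_zero _ hp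
  have hcp : ‖mat p k 1 0‖ = ‖(p : ℚ_[p]) ^ m‖ := by rw [hc, hpm]
  have hc0 : mat p k 1 0 ≠ 0 := by
    rw [← norm_ne_zero_iff, hcp, norm_ne_zero_iff]; exact hpm0
  have hdet := hK.2
  have eta := mat_eta4 p k
  have hdt : (mat p k).det = mat p k 0 0 * mat p k 1 1 - mat p k 0 1 * mat p k 1 0 :=
    Matrix.det_fin_two _
  generalize mat p k 0 0 = a at *
  generalize mat p k 0 1 = b at *
  generalize mat p k 1 0 = c at *
  generalize (mat p k).det = D at *
  rw [hd] at eta hdt hd1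
  have hd0 : (d : ℚ_[p]) ≠ 0 := d.ne_zero
  have hu0 : (u : ℚ_[p]) ≠ 0 := u.ne_zero
  have hu1 : ‖(u : ℚ_[p])‖ = 1 := by
    rw [hu, norm_div, norm_mul, hcp, hdet, mul_one, div_self]
    exact norm_ne_zero_iff.mpr hpm0
  -- epsilon = c / (d p^m)
  have he0 : c / (d * (p : ℚ_[p]) ^ m) ≠ 0 := div_ne_zero hc0 (mul_ne_zero hd0 hpm0)
  have he1 : ‖c / (d * (p : ℚ_[p]) ^ m)‖ = 1 := by
    rw [norm_div, norm_mul, hcp, hd1, one_mul, div_self]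
    exact norm_ne_zero_iff.mpr hpm0
  have hk : k = mk4 p u b 0 d (by simp [hu0, hd0]) * lowerPm p m *
      mk4 p (c / (d * (p : ℚ_[p]) ^ m)) 0 0 1 (by simpa using he0) := by
    apply mat_inj4
    rw [mat_mul4, mat_mul4, mat_mk4, mat_mk4, mat_lower4, eta]
    have : a * d = D + b * c := by rw [hdt]; ring
    have e1 : a = (u + b * (p : ℚ_[p]) ^ m) * (c / (d * (p : ℚ_[p]) ^ m)) := by
      rw [hu]; field_simp; linear_combination this
    have e2 : c = d * (p : ℚ_[p]) ^ m * (c / (d * (p : ℚ_[p]) ^ m)) := by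
      field_simp
    ext i j
    fin_cases i <;> fin_cases j <;> simp [Matrix.mul_apply, Fin.sum_univ_two]
    · simpa using e1
    · simpa using e2
  rw [hk, hvI _ _ 1 _ (by simp [mat_mk4]), hvB _ _ u d (by simp [mat_mk4]) (by simp [mat_mk4])
    (by simp [mat_mk4]), hv1, norm_div, hu1, hd1]
  · simp
  · refine ⟨⟨?_, ?_⟩, Or.inr ⟨?_, ?_, ?_⟩⟩
    · intro i j
      rw [mat_mk4]
      fin_cases i <;> fin_cases j <;> simp [-norm_div, he1]
    · rw [mat_mk4, Matrix.det_fin_two_of]; simpa using he1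
    · rw [mat_mk4]; simpa using he1
    · simp [mat_mk4]
    · simp [mat_mk4]

/-- Values of the translates `γ^r · v` of the new vector `v` of the principal
series `Ind_B^G (μ ⊗ μ')` when both `μ` and `μ'` are ramified, with
`m = cond(μ') ≥ 1` and conductor `n = cond(μ) + cond(μ') > m`. -/
theorem stmt4 (m n : ℕ) (hm : 1 ≤ m) (hmn : m < n)
    (μ μ' : ℚ_[p]ˣ →* ℂˣ)
    (hμtriv : TrivialOnOnePlusP p (n - m) μ)
    (hμ'triv : TrivialOnOnePlusP p m μ')
    (hμram : ¬ Unramified p μ) (hμ'ram : ¬ Unramified p μ')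
    (α : ℂ) (hα : α = ((μ (pu p) : ℂ))⁻¹ * (Real.sqrt p : ℂ))
    (v : GL (Fin 2) ℚ_[p] → ℂ)
    (hvB : ∀ (b g : GL (Fin 2) ℚ_[p]) (a d : ℚ_[p]ˣ),
      mat p b 1 0 = 0 → mat p b 0 0 = a → mat p b 1 1 = d →
      v (b * g) = (μ a : ℂ) * (μ' d : ℂ) *
        (Real.sqrt ‖(a : ℚ_[p]) / (d : ℚ_[p])‖ : ℂ) * v g)
    (hvI : ∀ (g k : GL (Fin 2) ℚ_[p]) (d : ℚ_[p]ˣ),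
      inI p n k → mat p k 1 1 = d →
      v (g * k) = (μ d : ℂ) * (μ' d : ℂ) * v g)
    (hvsupp : ∀ k : GL (Fin 2) ℚ_[p], inK p k →
      ¬ (inI p m k ∧ ¬ inI p (m + 1) k) → v k = 0)
    (hv1 : v (lowerPm p m) = 1) :
    ∀ (r : ℕ) (k : GL (Fin 2) ℚ_[p]),
      (∀ (u d : ℚ_[p]ˣ), inI p (m + r) k → ¬ inI p (m + r + 1) k →
        (u : ℚ_[p]) = (p : ℚ_[p]) ^ (m + r) * (mat p k).det / mat p k 1 0 →
        mat p k 1 1 = d →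
        v (k * gamma p ^ r) = α ^ r * (μ u : ℂ) * (μ' d : ℂ)) ∧
      (inK p k → ¬ (inI p (m + r) k ∧ ¬ inI p (m + r + 1) k) →
        v (k * gamma p ^ r) = 0) := by
  intro r k
  have hp := pne4 p
  have hpr0 : (p : ℚ_[p]) ^ r ≠ 0 := pow_ne_zero _ hp
  have hpR : (0 : ℝ) < p := by exact_mod_cast (Fact.out : p.Prime).pos
  have hpr : ‖(p : ℚ_[p]) ^ r‖ = (p : ℝ) ^ (-(r : ℤ)) := by
    rw [← zpow_natCast, Padic.norm_p_zpow]
  have hpr1 : ‖(p : ℚ_[p]) ^ r‖ ≤ 1 := by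
    rw [norm_pow]; exact pow_le_one₀ (norm_nonneg _) Padic.norm_p_lt_one.le
  have hdt : (mat p k).det = mat p k 0 0 * mat p k 1 1 - mat p k 0 1 * mat p k 1 0 :=
    Matrix.det_fin_two _
  have hdet0 : (mat p k).det ≠ 0 := by
    have := (Matrix.isUnit_iff_isUnit_det (mat p k)).mp k.isUnit
    exact this.ne_zero
  -- the integral representative
  have hk'0 : mat p k 0 0 * mat p k 1 1 -
      (mat p k 0 1 * (p : ℚ_[p]) ^ r) * (mat p k 1 0 / (p : ℚ_[p]) ^ r) ≠ 0 := by
    intro h; apply hdet0; rw [hdt, ← h]; field_simp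
  obtain ⟨k', hk'⟩ : ∃ k', k' = mk4 p (mat p k 0 0) (mat p k 0 1 * (p : ℚ_[p]) ^ r)
    (mat p k 1 0 / (p : ℚ_[p]) ^ r) (mat p k 1 1) hk'0 := ⟨_, rfl⟩
  have m00 : mat p k' 0 0 = mat p k 0 0 := by rw [hk']; rfl
  have m01 : mat p k' 0 1 = mat p k 0 1 * (p : ℚ_[p]) ^ r := by rw [hk']; rfl
  have m10 : mat p k' 1 0 = mat p k 1 0 / (p : ℚ_[p]) ^ r := by rw [hk']; rfl
  have m11 : mat p k' 1 1 = mat p k 1 1 := by rw [hk']; rfl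
  have mdet : (mat p k').det = (mat p k).det := by
    rw [hdt, Matrix.det_fin_two, m00, m01, m10, m11]; field_simp
  have hval : v (k * gamma p ^ r) = α ^ r * v k' := by
    have e : k * gamma p ^ r = gamma p ^ r * k' := by
      apply mat_inj4
      rw [mat_mul4, mat_mul4, mat_gamma_pow4, mat_eta4 p k, mat_eta4 p k', m00, m01, m10, m11]
      ext i j
      fin_cases i <;> fin_cases j <;> simp [Matrix.mul_apply, Fin.sum_univ_two]
      · ring
      · field_simp
      · ring
    rw [e, hvB _ _ ((pu p ^ r)⁻¹) 1 (by simp [mat_gamma_pow4]) (by simp [mat_gamma_pow4, pu])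
      (by simp [mat_gamma_pow4]), hα]
    have : Real.sqrt ‖(((pu p ^ r)⁻¹ : ℚ_[p]ˣ) : ℚ_[p]) / ((1 : ℚ_[p]ˣ) : ℚ_[p])‖
        = Real.sqrt p ^ r := by
      have : ‖(((pu p ^ r)⁻¹ : ℚ_[p]ˣ) : ℚ_[p]) / ((1 : ℚ_[p]ˣ) : ℚ_[p])‖ = (Real.sqrt p ^ r) ^ 2 := by
        rw [← pow_mul, mul_comm, pow_mul, Real.sq_sqrt hpR.le]
        simp [pu]
      rw [this, Real.sqrt_sq (by positivity)]
    rw [this]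
    simp [mul_pow]
  have hnc : ∀ j : ℕ, ‖mat p k' 1 0‖ ≤ (p : ℝ) ^ (-(j : ℤ)) ↔
      ‖mat p k 1 0‖ ≤ (p : ℝ) ^ (-((j + r : ℕ) : ℤ)) := by
    intro j
    rw [m10, norm_div, hpr, div_le_iff₀ (by positivity), ← zpow_add₀ hpR.ne']
    push_cast
    rw [neg_add]
  have hK' : inK p k → ‖mat p k 1 0‖ ≤ (p : ℝ) ^ (-(r : ℤ)) → inK p k' := by
    intro hK hc
    refine ⟨?_, by rw [mdet]; exact hK.2⟩
    have h10 := (hnc 0).2 (by simpa using hc)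
    intro i j
    fin_cases i <;> fin_cases j
    · simpa [m00] using hK.1 0 0
    · simp only [Fin.zero_eta, Fin.mk_one, m01, norm_mul]
      exact mul_le_one₀ (hK.1 0 1) (norm_nonneg _) hpr1
    · simpa using h10
    · simpa [m11] using hK.1 1 1
  have hI : ∀ j, 1 ≤ j → inK p k → inK p k' → (inI p j k' ↔ inI p (j + r) k) := by
    intro j hj h h'
    rw [inI_iff4 p hj _ h', inI_iff4 p (by omega) _ h, hnc, m00, m11]
  refine ⟨?_, ?_⟩
  · intro u d h1 h2 hu hd
    have hK := h1.1
    have hc := ((inI_iff4 p (by omega) k hK).1 h1).2.2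
    have hK2 := hK' hK (hc.trans (by
      apply zpow_le_zpow_right₀ (by exact_mod_cast (Fact.out : p.Prime).one_le)
      push_cast; omega))
    rw [hval, base4 p m n hm μ μ' v hvB hvI hv1 k' u d ((hI m hm hK hK2).2 h1)
      (fun h => h2 (by have := (hI (m + 1) (by omega) hK hK2).1 h; rwa [add_right_comm] at this))
      _ (by rw [m11, hd]), mul_assoc]
    rw [hu, mdet, m10, pow_add]
    field_simp
  · intro hK hn
    by_cases hc : ‖mat p k 1 0‖ ≤ (p : ℝ) ^ (-(r : ℤ))
    · have hK2 := hK' hK hc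
      rw [hval, hvsupp k' hK2, mul_zero]
      rw [hI m hm hK hK2, hI (m + 1) (by omega) hK hK2, add_right_comm m 1 r]
      exact hn
    · push Not at hc
      have hC1 : 1 < ‖mat p k' 1 0‖ := by
        have := (hnc 0).not.2 (by simpa using hc)
        simpa using this
      have hC0 : mat p k' 1 0 ≠ 0 := by
        rw [← norm_pos_iff]; linarith
      have hD0 : (mat p k').det ≠ 0 := by rw [mdet]; exact hdet0
      have e : k' = mk4 p ((mat p k').det / mat p k' 1 0) (mat p k' 0 0) 0 (mat p k' 1 0)
            (by simp [hC0, hD0]) *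
          mk4 p 0 (-1) 1 (mat p k' 1 1 / mat p k' 1 0) (by simp) := by
        apply mat_inj4
        rw [mat_mul4, mat_mk4, mat_mk4, Matrix.det_fin_two]
        ext i j
        fin_cases i <;> fin_cases j <;> simp [Matrix.mul_apply, Fin.sum_univ_two]
        · field_simp
          ring
        · field_simp
      rw [hval, e, hvB _ _ (Units.mk0 _ (div_ne_zero hD0 hC0)) (Units.mk0 _ hC0) rfl rfl rfl,
        hvsupp, mul_zero, mul_zero]
      · refine ⟨?_, ?_⟩
        · intro i j
          rw [mat_mk4]
          have : ‖mat p k' 1 1 / mat p k' 1 0‖ ≤ 1 := by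
            rw [norm_div, m11]
            exact div_le_one_of_le₀ ((hK.1 1 1).trans hC1.le) (norm_nonneg _)
          fin_cases i <;> fin_cases j <;> simp [-norm_div, this]
        · rw [mat_mk4, Matrix.det_fin_two_of]; simp
      · rintro ⟨⟨_, h | h⟩, _⟩
        · omega
        · have := h.1
          rw [mat_mk4] at this
          simp at this
end
end

section
/- Let eta : Q_p^* -> C^* be an unramified group homomorphism. Let v : G -> C be a function such that v(b*g) = eta(det(b)) * v(g) for every b in B and g in G, v(k) = 1 for every k in I, and v(k) = 0 for every k in K \ I. Then for every integer r >= 0 and every k in K: v(k*gamma^r) = eta(p)^{-r} if k lies in I_{r+1}, and v(k*gamma^r) = 0 if k lies in K \ I_{r+1}. -/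
open Matrix

noncomputable section

variable (p : ℕ) [Fact p.Prime]

theorem aux_mul (g : GL (Fin 2) ℚ_[p]) (h : GL (Fin 2) ℚ_[p]) :
    mat p (g * h) = mat p g * mat p h := by
  simp [mat]

theorem aux_lt (η : ℚ_[p]ˣ →* ℂˣ)
    (v : GL (Fin 2) ℚ_[p] → ℂ)
    (hvB : ∀ (b g : GL (Fin 2) ℚ_[p]), mat p b 1 0 = 0 →
      v (b * g) = (η (Matrix.GeneralLinearGroup.det b) : ℂ) * v g)
    (hvI : ∀ k : GL (Fin 2) ℚ_[p], inI p 1 k → v k = 1)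
    (g : GL (Fin 2) ℚ_[p]) (h : ‖mat p g 1 0‖ < ‖mat p g 1 1‖) :
    v g = (η (Matrix.GeneralLinearGroup.det g) : ℂ) := by
  have hy : mat p g 1 1 ≠ 0 := norm_pos_iff.1 (lt_of_le_of_lt (norm_nonneg _) h)
  set x := mat p g 1 0 with hx
  set y := mat p g 1 1 with hy'
  have hn : ‖x / y‖ < 1 := by
    rw [norm_div, div_lt_one (norm_pos_iff.2 hy)]; exact h
  let l : GL (Fin 2) ℚ_[p] :=
    Matrix.GeneralLinearGroup.mkOfDetNeZero !![1, 0; x / y, 1] (by simp [Matrix.det_fin_two_of])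
  let l' : GL (Fin 2) ℚ_[p] :=
    Matrix.GeneralLinearGroup.mkOfDetNeZero !![1, 0; -(x / y), 1] (by simp [Matrix.det_fin_two_of])
  have hl : mat p l = !![1, 0; x / y, 1] := rfl
  have hl' : mat p l' = !![1, 0; -(x / y), 1] := rfl
  have hll : l' * l = 1 := by
    apply Units.ext
    change mat p (l' * l) = 1
    rw [aux_mul, hl, hl']
    ext i j; fin_cases i <;> fin_cases j <;> simp [Matrix.mul_apply, Fin.sum_univ_two]
  have hdl : Matrix.GeneralLinearGroup.det l' = 1 := by
    apply Units.ext
    change (mat p l').det = 1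
    rw [hl']; simp [Matrix.det_fin_two_of]
  have hb := hvB (g * l') l (by
    rw [aux_mul, hl']
    simp only [Matrix.mul_apply, Fin.sum_univ_two]
    rw [← hx, ← hy']
    simp
    field_simp
    ring)
  rw [mul_assoc, hll, mul_one, map_mul, hdl, mul_one] at hb
  rw [hb, hvI l, mul_one]
  refine ⟨⟨?_, ?_⟩, Or.inr ?_⟩
  · rw [hl]
    intro i j; fin_cases i <;> fin_cases j <;> simp
    simpa using hn.le
  · rw [hl]; simp [Matrix.det_fin_two_of]
  · rw [hl]
    refine ⟨by simp, by simp, ?_⟩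
    have := (Padic.norm_le_pow_iff_norm_lt_pow_add_one (x / y) (-1)).2 (by simpa using hn)
    simpa using this

theorem aux_ge (η : ℚ_[p]ˣ →* ℂˣ)
    (v : GL (Fin 2) ℚ_[p] → ℂ)
    (hvB : ∀ (b g : GL (Fin 2) ℚ_[p]), mat p b 1 0 = 0 →
      v (b * g) = (η (Matrix.GeneralLinearGroup.det b) : ℂ) * v g)
    (hvsupp : ∀ k : GL (Fin 2) ℚ_[p], inK p k → ¬ inI p 1 k → v k = 0)
    (g : GL (Fin 2) ℚ_[p]) (h : ‖mat p g 1 1‖ ≤ ‖mat p g 1 0‖) :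
    v g = 0 := by
  have hx0 : mat p g 1 0 ≠ 0 := by
    intro h0
    rw [h0, norm_zero] at h
    have h1 : mat p g 1 1 = 0 := norm_le_zero_iff.1 h
    have hd : (mat p g).det ≠ 0 := (Matrix.GeneralLinearGroup.det g).ne_zero
    apply hd
    rw [Matrix.det_fin_two, h0, h1]; simp
  set x := mat p g 1 0 with hx
  set y := mat p g 1 1 with hy'
  have hn : ‖y / x‖ ≤ 1 := by
    rw [norm_div, div_le_one (norm_pos_iff.2 hx0)]; exact h
  let l : GL (Fin 2) ℚ_[p] :=
    Matrix.GeneralLinearGroup.mkOfDetNeZero !![0, -1; 1, y / x] (by simp [Matrix.det_fin_two_of])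
  let l' : GL (Fin 2) ℚ_[p] :=
    Matrix.GeneralLinearGroup.mkOfDetNeZero !![y / x, 1; -1, 0] (by simp [Matrix.det_fin_two_of])
  have hl : mat p l = !![0, -1; 1, y / x] := rfl
  have hl' : mat p l' = !![y / x, 1; -1, 0] := rfl
  have hll : l' * l = 1 := by
    apply Units.ext
    change mat p (l' * l) = 1
    rw [aux_mul, hl, hl']
    ext i j; fin_cases i <;> fin_cases j <;> simp [Matrix.mul_apply, Fin.sum_univ_two]
  have hb := hvB (g * l') l (by
    rw [aux_mul, hl']
    simp only [Matrix.mul_apply, Fin.sum_univ_two]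
    rw [← hx, ← hy']
    simp
    field_simp
    ring)
  rw [mul_assoc, hll, mul_one] at hb
  rw [hb, hvsupp l, mul_zero]
  · refine ⟨?_, ?_⟩
    · rw [hl]
      intro i j; fin_cases i <;> fin_cases j <;> simp
      simpa using hn
    · rw [hl]; simp [Matrix.det_fin_two_of]
  · rintro ⟨-, h | ⟨h, -⟩⟩
    · exact one_ne_zero h
    · rw [hl] at h; simp at h

theorem aux_gamma (r : ℕ) :
    mat p (gamma p ^ r) = !![((p : ℚ_[p])⁻¹) ^ r, 0; 0, 1] := by
  induction r with
  | zero => ext i j; fin_cases i <;> fin_cases j <;> simp [mat]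
  | succ n ih =>
    rw [pow_succ, aux_mul, ih]
    have : mat p (gamma p) = !![(p : ℚ_[p])⁻¹, 0; 0, 1] := rfl
    rw [this]
    ext i j; fin_cases i <;> fin_cases j <;> simp [Matrix.mul_apply, Fin.sum_univ_two, pow_succ]

/-- Lemma «calcul-SP-NR1»: values of the translates `γ^r · v^I` of the
`I`-supported vector `v^I` in `Ind_B^G ((η ∘ det) δ^{-1/2})`, for `η`
unramified. -/
theorem stmt5 (η : ℚ_[p]ˣ →* ℂˣ) (hη : Unramified p η)
    (v : GL (Fin 2) ℚ_[p] → ℂ)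
    (hvB : ∀ (b g : GL (Fin 2) ℚ_[p]), mat p b 1 0 = 0 →
      v (b * g) = (η (Matrix.GeneralLinearGroup.det b) : ℂ) * v g)
    (hvI : ∀ k : GL (Fin 2) ℚ_[p], inI p 1 k → v k = 1)
    (hvsupp : ∀ k : GL (Fin 2) ℚ_[p], inK p k → ¬ inI p 1 k → v k = 0) :
    ∀ (r : ℕ) (k : GL (Fin 2) ℚ_[p]),
      (inI p (r + 1) k → v (k * gamma p ^ r) = ((η (pu p) : ℂ))⁻¹ ^ r) ∧
      (inK p k → ¬ inI p (r + 1) k → v (k * gamma p ^ r) = 0) := by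
  intro r k
  have hp0 : (0 : ℝ) < p := by exact_mod_cast (Fact.out : p.Prime).pos
  have hp1 : (1 : ℝ) < p := by exact_mod_cast (Fact.out : p.Prime).one_lt
  have h10 : ‖mat p (k * gamma p ^ r) 1 0‖ = ‖mat p k 1 0‖ * (p : ℝ) ^ r := by
    rw [aux_mul, aux_gamma]
    simp [Matrix.mul_apply, Fin.sum_univ_two]
  have h11 : mat p (k * gamma p ^ r) 1 1 = mat p k 1 1 := by
    rw [aux_mul, aux_gamma]
    simp [Matrix.mul_apply, Fin.sum_univ_two]
  have hstep : ∀ c : ℚ_[p], ‖c‖ ≤ (p : ℝ) ^ (-((r + 1 : ℕ) : ℤ)) ↔ ‖c‖ * (p : ℝ) ^ r < 1 := by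
    intro c
    rw [Padic.norm_le_pow_iff_norm_lt_pow_add_one]
    have : (-((r + 1 : ℕ) : ℤ)) + 1 = -(r : ℤ) := by push_cast; ring
    rw [this, _root_.zpow_neg, _root_.zpow_natCast, ← one_div, lt_div_iff₀ (by positivity)]
  constructor
  · rintro ⟨hK, h | ⟨ha, hd, hc⟩⟩
    · omega
    rw [aux_lt p η v hvB hvI]
    · have hg : Matrix.GeneralLinearGroup.det (gamma p) = (pu p)⁻¹ := by
        apply Units.ext
        change (mat p (gamma p)).det = (p : ℚ_[p])⁻¹
        have : mat p (gamma p) = !![(p : ℚ_[p])⁻¹, 0; 0, 1] := rfl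
        rw [this]; simp [Matrix.det_fin_two_of]
      rw [map_mul, map_pow, hg, map_mul, hη _ hK.2]
      simp
    · rw [h10, h11, hd]; exact (hstep _).1 hc
  · intro hK hI
    apply aux_ge p η v hvB hvsupp
    rw [h10, h11]
    by_contra hlt
    push Not at hlt
    apply hI
    have hd1 := hK.1 1 1
    have ha1 := hK.1 0 0
    have hb1 := hK.1 0 1
    have hlt1 := lt_of_lt_of_le hlt hd1
    have hc1 : ‖mat p k 1 0‖ < 1 := by
      refine lt_of_le_of_lt ?_ hlt1
      exact le_mul_of_one_le_right (norm_nonneg _) (one_le_pow₀ hp1.le)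
    have hbc : ‖mat p k 0 1 * mat p k 1 0‖ < 1 := by
      rw [norm_mul]
      exact lt_of_le_of_lt (mul_le_of_le_one_left (norm_nonneg _) hb1) hc1
    have had : 1 ≤ ‖mat p k 0 0‖ * ‖mat p k 1 1‖ := by
      by_contra hcon
      push Not at hcon
      rw [← norm_mul] at hcon
      have hdet := hK.2
      rw [Matrix.det_fin_two, sub_eq_add_neg] at hdet
      have := Padic.nonarchimedean (mat p k 0 0 * mat p k 1 1) (-(mat p k 0 1 * mat p k 1 0))
      rw [hdet, norm_neg] at this
      exact absurd this (not_le.2 (max_lt hcon hbc))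
    refine ⟨hK, Or.inr ⟨?_, ?_, (hstep _).2 hlt1⟩⟩
    · exact le_antisymm ha1 (had.trans (mul_le_of_le_one_right (norm_nonneg _) hd1))
    · exact le_antisymm hd1 (had.trans (mul_le_of_le_one_left (norm_nonneg _) ha1))
end
end
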